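/- Let μ be a finite positive Borel measure on [0,1). The following conditions are equivalent: (i) the operator I_μ is well defined on the Bloch space B and bounded from B into Λ²_{1/2}; (ii) the operator H_μ is well defined on the Bloch space B and bounded from B into Λ²_{1/2}; (iii) μ is a 1-logarithmic 1-Carleson measure; (iv) ∫_{[0,1)} t^n log(1/(1-t)) dμ(t) = O(1/n) as n → ∞. -/

import Mathlib

open MeasureTheory Set Metric ENNReal

noncomputable section

namespace PaperHankel

/-- The moment of order `n` of a measure on `[0,1)`:  `μ_n = ∫_{[0,1)} t^n dμ(t)`. -/
def mom (μ : Measure ℝ) (n : ℕ) : ℝ := ∫ t in Ico (0:ℝ) 1, t ^ n ∂μ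

/-- The `n`-th Taylor coefficient of `f` at `0`. -/
def tc (f : ℂ → ℂ) (n : ℕ) : ℂ := iteratedDeriv n f 0 / n.factorial

/-- The `n`-th Taylor coefficient of `H_μ f`, namely `∑_k μ_{n+k} a_k`. -/
def hmuCoeff (μ : Measure ℝ) (f : ℂ → ℂ) (n : ℕ) : ℂ :=
  ∑' k : ℕ, (mom μ (n + k) : ℂ) * tc f k

/-- `H_μ f` is well defined: each coefficient series converges absolutely, and the resulting
power series has radius of convergence at least `1`. -/
def HmuWD (μ : Measure ℝ) (f : ℂ → ℂ) : Prop :=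
  (∀ n : ℕ, Summable fun k : ℕ => ‖(mom μ (n + k) : ℂ) * tc f k‖) ∧
  ∀ z ∈ ball (0:ℂ) 1, Summable fun n : ℕ => ‖hmuCoeff μ f n * z ^ n‖

/-- The generalized Hilbert operator induced by the Hankel matrix of moments of `μ`. -/
def Hmu (μ : Measure ℝ) (f : ℂ → ℂ) : ℂ → ℂ :=
  fun z => ∑' n : ℕ, hmuCoeff μ f n * z ^ n

/-- `I_μ f` is well defined: the defining integral converges absolutely for every `z ∈ 𝔻`. -/
def ImuWD (μ : Measure ℝ) (f : ℂ → ℂ) : Prop :=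
  ∀ z ∈ ball (0:ℂ) 1, IntegrableOn (fun t : ℝ => f t / (1 - t * z)) (Ico (0:ℝ) 1) μ

/-- The integral operator `I_μ f (z) = ∫_{[0,1)} f(t)/(1-tz) dμ(t)`. -/
def Imu (μ : Measure ℝ) (f : ℂ → ℂ) : ℂ → ℂ :=
  fun z => ∫ t in Ico (0:ℝ) 1, f t / (1 - t * z) ∂μ

/-- The `p`-th circle mean `M_p(r,f)` raised into the Hardy norm shape:
`((1/2π) ∫_0^{2π} |f(r e^{iθ})|^p dθ)^{1/p}`. -/
def circMean (p : ℝ) (f : ℂ → ℂ) (r : ℝ) : ℝ :=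
  ((2 * Real.pi)⁻¹ * ∫ θ in (0:ℝ)..(2 * Real.pi),
      ‖f (r * Complex.exp (θ * Complex.I))‖ ^ p) ^ (1 / p)

/-- Membership in the Hardy space `H^p`. -/
def MemHardy (p : ℝ) (f : ℂ → ℂ) : Prop :=
  DifferentiableOn ℂ f (ball (0:ℂ) 1) ∧ ∃ M : ℝ, ∀ r ∈ Ico (0:ℝ) 1, circMean p f r ≤ M

/-- The `H^p` norm. -/
def hardyNorm (p : ℝ) (f : ℂ → ℂ) : ℝ :=
  sSup {x : ℝ | ∃ r ∈ Ico (0:ℝ) 1, x = circMean p f r}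

/-- Membership in `H^∞`: analytic and bounded on the unit disc. -/
def MemHinf (f : ℂ → ℂ) : Prop :=
  DifferentiableOn ℂ f (ball (0:ℂ) 1) ∧ ∃ M : ℝ, ∀ z ∈ ball (0:ℂ) 1, ‖f z‖ ≤ M

/-- The `H^∞` norm. -/
def hinfNorm (f : ℂ → ℂ) : ℝ := sSup {x : ℝ | ∃ z ∈ ball (0:ℂ) 1, x = ‖f z‖}

/-- The mean `M_2(r,g) = ((1/2π) ∫_0^{2π} |g(r e^{iθ})|² dθ)^{1/2}`. -/
def M2 (g : ℂ → ℂ) (r : ℝ) : ℝ :=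
  Real.sqrt ((2 * Real.pi)⁻¹ * ∫ θ in (0:ℝ)..(2 * Real.pi),
      ‖g (r * Complex.exp (θ * Complex.I))‖ ^ 2)

/-- Membership in the mean Lipschitz space `Λ²_{1/2}`:
`M_2(r,f') = O((1-r)^{-1/2})` as `r → 1⁻`. -/
def MemLambda (f : ℂ → ℂ) : Prop :=
  DifferentiableOn ℂ f (ball (0:ℂ) 1) ∧
  ∃ C : ℝ, ∀ r ∈ Ico (0:ℝ) 1, Real.sqrt (1 - r) * M2 (deriv f) r ≤ C

/-- The norm on `Λ²_{1/2}`. -/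
def lambdaNorm (f : ℂ → ℂ) : ℝ :=
  ‖f 0‖ + sSup {x : ℝ | ∃ r ∈ Ico (0:ℝ) 1, x = Real.sqrt (1 - r) * M2 (deriv f) r}

/-- `∫_𝔻 |f'(z)|² g(z,a)^s dA(z)` with `g(z,a) = log |(1- ā z)/(z-a)|` and `dA` the
normalized area measure, computed as a lower integral in `[0,∞]`. -/
def qsInt (s : ℝ) (f : ℂ → ℂ) (a : ℂ) : ℝ≥0∞ :=
  (ENNReal.ofReal Real.pi)⁻¹ * ∫⁻ z in ball (0:ℂ) 1,
    ENNReal.ofReal (‖deriv f z‖ ^ 2 * (Real.log ‖(1 - (starRingEnd ℂ) a * z) / (z - a)‖) ^ s)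

/-- Membership in `Q_s`: analytic on `𝔻` with `ρ_{Q_s}(f)² = sup_{a ∈ 𝔻} ∫ ... < ∞`. -/
def MemQs (s : ℝ) (f : ℂ → ℂ) : Prop :=
  DifferentiableOn ℂ f (ball (0:ℂ) 1) ∧ (⨆ a ∈ ball (0:ℂ) 1, qsInt s f a) < ⊤

/-- The norm on `Q_s`, `‖f‖ = |f(0)| + ρ_{Q_s}(f)`. -/
def qsNorm (s : ℝ) (f : ℂ → ℂ) : ℝ :=
  ‖f 0‖ + Real.sqrt (⨆ a ∈ ball (0:ℂ) 1, qsInt s f a).toReal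

/-- The condition `∫_{[0,1)} tⁿ log(1/(1-t)) dμ(t) = O(1/n)`, stated with the lower
integral so that in particular the integrals are finite. -/
def LogMomentBigO (μ : Measure ℝ) : Prop :=
  ∃ C > 0, ∀ n : ℕ, 1 ≤ n →
    (∫⁻ t in Ico (0:ℝ) 1, ENNReal.ofReal (t ^ n * Real.log (1 / (1 - t))) ∂μ) ≤
      ENNReal.ofReal (C / n)

/-- Membership in the Bloch space. -/
def MemBloch (f : ℂ → ℂ) : Prop :=
  DifferentiableOn ℂ f (ball (0:ℂ) 1) ∧
  ∃ M : ℝ, ∀ z ∈ ball (0:ℂ) 1, (1 - ‖z‖ ^ 2) * ‖deriv f z‖ ≤ M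

/-- The Bloch norm `‖f‖ = |f(0)| + ρ_B(f)`. -/
def blochNorm (f : ℂ → ℂ) : ℝ :=
  ‖f 0‖ + sSup {x : ℝ | ∃ z ∈ ball (0:ℂ) 1, x = (1 - ‖z‖ ^ 2) * ‖deriv f z‖}

/-- Membership in the Besov space `B^p`. -/
def MemBesov (p : ℝ) (f : ℂ → ℂ) : Prop :=
  DifferentiableOn ℂ f (ball (0:ℂ) 1) ∧
  IntegrableOn (fun z : ℂ => (1 - ‖z‖ ^ 2) ^ (p - 2) * ‖deriv f z‖ ^ p) (ball (0:ℂ) 1) volume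

/-- The Besov norm `‖f‖ = |f(0)| + ρ_p(f)`. -/
def besovNorm (p : ℝ) (f : ℂ → ℂ) : ℝ :=
  ‖f 0‖ + (Real.pi⁻¹ *
    ∫ z in ball (0:ℂ) 1, (1 - ‖z‖ ^ 2) ^ (p - 2) * ‖deriv f z‖ ^ p) ^ (1 / p)

/-- `μ` is an `α`-logarithmic `s`-Carleson measure on `[0,1)`. -/
def IsLogCarleson (μ : Measure ℝ) (α s : ℝ) : Prop :=
  ∃ C > 0, ∀ t ∈ Ico (0:ℝ) 1,
    (μ (Ico t 1)).toReal * Real.log (2 / (1 - t)) ^ α ≤ C * (1 - t) ^ s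

/-- `μ` is an `s`-Carleson measure on `[0,1)`. -/
def IsCarleson (μ : Measure ℝ) (s : ℝ) : Prop :=
  ∃ C > 0, ∀ t ∈ Ico (0:ℝ) 1, (μ (Ico t 1)).toReal ≤ C * (1 - t) ^ s

/-!
A Bloch function satisfies `|f(t)| ≲ log (2 / (1 - t))` on `[0, 1)`, so the moments `∫ tⁿ f dμ`,
which are the Taylor coefficients of both `I_μ f` and `H_μ f`, are dominated by those of the measure
`log (2 / (1 - t)) dμ(t)`. Cutting `[t, 1)` dyadically shows that `μ` is 1-logarithmic 1-Carleson
exactly when this measure is 1-Carleson, that is, when its moments are `O(1/n)`.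

On the function side, Taylor coefficients of size `O(1/n)` put a function in `Λ²_{1/2}` by
Parseval's identity, and conversely a function of `Λ²_{1/2}` whose coefficients are nonnegative and
decreasing has coefficients of size `O(1/n)`. The latter, applied to the images of the Bloch
function `log (1 / (1 - z))`, gives the necessity. The series defining `H_μ f` converge for Bloch
`f` because Parseval also controls `∑_{k ≤ N} k |a_k|` by `N ^ (3/2)`, whence `∑ |a_k| / k < ∞`.
-/

lemma hasSum_tc {f : ℂ → ℂ} (hf : DifferentiableOn ℂ f (ball (0 : ℂ) 1)) {z : ℂ}
    (hz : z ∈ ball (0 : ℂ) 1) : HasSum (fun n => tc f n * z ^ n) (f z) := by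
  have hterm (n : ℕ) :
      (n.factorial : ℂ)⁻¹ • (z - 0) ^ n • iteratedDeriv n f 0 = tc f n * z ^ n := by
    simp only [tc, smul_eq_mul, sub_zero]
    ring
  simpa only [hterm] using Complex.hasSum_taylorSeries_on_ball hf hz

lemma tc_deriv (f : ℂ → ℂ) (n : ℕ) : tc (deriv f) n = (n + 1) * tc f (n + 1) := by
  have : (n + 1 : ℂ) ≠ 0 := Nat.cast_add_one_ne_zero n
  simp only [tc, iteratedDeriv_succ', Nat.factorial_succ, Nat.cast_mul, Nat.cast_add_one]
  field_simp

lemma norm_tc_deriv (f : ℂ → ℂ) (n : ℕ) :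
    ‖tc (deriv f) n‖ = (n + 1) * ‖tc f (n + 1)‖ := by
  rw [tc_deriv, norm_mul, ← Nat.cast_add_one, Complex.norm_natCast, Nat.cast_add_one]

lemma hasFPowerSeriesOnBall_of_hasSum {f : ℂ → ℂ} {b : ℕ → ℂ}
    (h : ∀ z ∈ ball (0 : ℂ) 1, HasSum (fun n => b n * z ^ n) (f z)) :
    HasFPowerSeriesOnBall f (FormalMultilinearSeries.ofScalars ℂ b) 0 1 where
  r_le := by
    refine ENNReal.le_of_forall_nnreal_lt fun r hr => ?_
    have hr1 : (r : ℝ) < 1 := by exact_mod_cast hr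
    refine FormalMultilinearSeries.le_radius_of_summable _ ?_
    simpa using (h (r : ℂ) (by simpa using hr1)).summable.norm
  r_pos := one_pos
  hasSum {y} hy := by
    have hy1 : y ∈ ball (0 : ℂ) 1 := by
      simpa [← ENNReal.ofReal_one, Metric.eball_ofReal] using hy
    simpa [mul_comm] using h y hy1

lemma differentiableOn_of_hasSum {f : ℂ → ℂ} {b : ℕ → ℂ}
    (h : ∀ z ∈ ball (0 : ℂ) 1, HasSum (fun n => b n * z ^ n) (f z)) :
    DifferentiableOn ℂ f (ball (0 : ℂ) 1) := by
  simpa [← ENNReal.ofReal_one, Metric.eball_ofReal] using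
    (hasFPowerSeriesOnBall_of_hasSum h).differentiableOn

lemma tc_eq_of_hasSum {f : ℂ → ℂ} {b : ℕ → ℂ}
    (h : ∀ z ∈ ball (0 : ℂ) 1, HasSum (fun n => b n * z ^ n) (f z)) (n : ℕ) : tc f n = b n := by
  rw [tc, div_eq_iff (Nat.cast_ne_zero.2 n.factorial_ne_zero), iteratedDeriv_eq_iteratedFDeriv,
    ← (hasFPowerSeriesOnBall_of_hasSum h).factorial_smul 1 n]
  simp [mul_comm]

lemma tc_zero (f : ℂ → ℂ) : tc f 0 = f 0 := by simp [tc]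

/-! ### Parseval's identity and quadratic means -/

lemma sum_range_sq_norm_eq_circleAverage (b : ℕ → ℂ) (N : ℕ) :
    ∑ n ∈ Finset.range N, ‖b n‖ ^ 2 =
      Real.circleAverage (fun z => ‖∑ n ∈ Finset.range N, b n * z ^ n‖ ^ 2) 0 1 := by
  set p : Polynomial ℂ := ∑ n ∈ Finset.range N, Polynomial.monomial n (b n) with hp
  have hcoeff (i : ℕ) : p.coeff i = if i ∈ Finset.range N then b i else 0 := by
    simp [hp, Polynomial.finsetSum_coeff, Polynomial.coeff_monomial]
  have hsupp : p.support ⊆ Finset.range N := fun i hi => by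
    by_contra hN
    exact Polynomial.mem_support_iff.1 hi (by rw [hcoeff, if_neg hN])
  calc ∑ n ∈ Finset.range N, ‖b n‖ ^ 2
      = ∑ n ∈ Finset.range N, ‖p.coeff n‖ ^ 2 :=
        Finset.sum_congr rfl fun n hn => by rw [hcoeff, if_pos hn]
    _ = ∑ n ∈ p.support, ‖p.coeff n‖ ^ 2 :=
        (Finset.sum_subset hsupp fun n _ hn => by
          simp [Polynomial.notMem_support_iff.1 hn]).symm
    _ = Real.circleAverage (fun z => ‖∑ n ∈ Finset.range N, b n * z ^ n‖ ^ 2) 0 1 := by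
        rw [p.sum_sq_norm_coeff_eq_circleAverage]
        simp [hp, Polynomial.eval_finsetSum]

lemma hasSum_sq_norm_circleAverage {b : ℕ → ℂ} (hb : Summable fun n => ‖b n‖) :
    HasSum (fun n => ‖b n‖ ^ 2)
      (Real.circleAverage (fun z => ‖∑' n, b n * z ^ n‖ ^ 2) 0 1) := by
  have hterm (n : ℕ) (θ : ℝ) : ‖b n * circleMap 0 1 θ ^ n‖ = ‖b n‖ := by simp
  rw [hasSum_iff_tendsto_nat_of_nonneg fun n => sq_nonneg ‖b n‖]
  simp_rw [sum_range_sq_norm_eq_circleAverage, Real.circleAverage]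
  refine Filter.Tendsto.const_smul ?_ _
  refine intervalIntegral.tendsto_integral_filter_of_dominated_convergence
    (fun _ => (∑' n, ‖b n‖) ^ 2) ?_ ?_ intervalIntegrable_const ?_
  · refine .of_forall fun N => Continuous.aestronglyMeasurable ?_
    fun_prop
  · refine .of_forall fun N => .of_forall fun θ _ => ?_
    rw [norm_pow, norm_norm]
    gcongr
    calc ‖∑ n ∈ Finset.range N, b n * circleMap 0 1 θ ^ n‖
        ≤ ∑ n ∈ Finset.range N, ‖b n‖ :=
          norm_sum_le_of_le _ fun n _ => (hterm n θ).le
      _ ≤ ∑' n, ‖b n‖ := hb.sum_le_tsum _ fun _ _ => norm_nonneg _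
  · refine .of_forall fun θ _ => ?_
    have hsum : Summable fun n => b n * circleMap 0 1 θ ^ n :=
      .of_norm (by simpa only [hterm] using hb)
    exact (hsum.hasSum.tendsto_sum_nat.norm).pow 2

lemma M2_eq_sqrt_circleAverage (g : ℂ → ℂ) (r : ℝ) :
    M2 g r = √(Real.circleAverage (fun z => ‖g z‖ ^ 2) 0 r) := by
  simp [M2, Real.circleAverage, circleMap]

lemma M2_nonneg (g : ℂ → ℂ) (r : ℝ) : 0 ≤ M2 g r := Real.sqrt_nonneg _

lemma sq_M2 (g : ℂ → ℂ) (r : ℝ) :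
    M2 g r ^ 2 = Real.circleAverage (fun z => ‖g z‖ ^ 2) 0 r := by
  rw [M2_eq_sqrt_circleAverage]
  exact Real.sq_sqrt (Real.circleAverage_nonneg_of_nonneg fun z _ => sq_nonneg ‖g z‖)

lemma hasSum_sq_norm_tc_mul_pow {g : ℂ → ℂ} (hg : DifferentiableOn ℂ g (ball (0 : ℂ) 1)) {r : ℝ}
    (hr : r ∈ Ico (0 : ℝ) 1) :
    HasSum (fun n => ‖tc g n‖ ^ 2 * r ^ (2 * n)) (M2 g r ^ 2) := by
  have hexp {z : ℂ} (hz : ‖z‖ = 1) : HasSum (fun n => tc g n * r ^ n * z ^ n) (g (r * z)) := by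
    have hrz : (r : ℂ) * z ∈ ball (0 : ℂ) 1 := by simp [hz, abs_of_nonneg hr.1, hr.2]
    simpa only [mul_pow, mul_assoc] using hasSum_tc hg hrz
  have hsum : Summable fun n => ‖tc g n * r ^ n‖ := by
    simpa using (hexp norm_one).summable.norm
  convert hasSum_sq_norm_circleAverage hsum using 1
  · ext n
    rw [norm_mul, norm_pow, Complex.norm_of_nonneg hr.1]
    ring
  · rw [sq_M2, Real.circleAverage_eq_circleAverage_zero_one]
    refine Real.circleAverage_congr_sphere fun z hz => ?_
    have hz1 : ‖z‖ = 1 := by simpa using hz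
    simp [(hexp hz1).tsum_eq]

lemma M2_le_of_norm_le {g : ℂ → ℂ} {r A : ℝ} (hA : ∀ z ∈ sphere (0 : ℂ) |r|, ‖g z‖ ≤ A)
    (hg : ContinuousOn g (sphere 0 |r|)) : M2 g r ≤ A := by
  have hA0 : 0 ≤ A := (norm_nonneg _).trans (hA r (by simp))
  rw [M2_eq_sqrt_circleAverage, Real.sqrt_le_left hA0]
  refine Real.circleAverage_mono_on_of_le_circle (hg.norm.pow 2).circleIntegrable' fun z hz => ?_
  have := hA z hz
  gcongr

lemma one_sub_one_div_four_mul_mem_Ico {N : ℕ} (hN : 1 ≤ N) :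
    (1 - 1 / (4 * N) : ℝ) ∈ Ico (0 : ℝ) 1 := by
  have hN1 : (1 : ℝ) ≤ N := by exact_mod_cast hN
  refine ⟨?_, sub_lt_self _ (by positivity)⟩
  rw [sub_nonneg, div_le_one (by positivity)]
  linarith

/-- With `r = 1 - 1 / (4N)`, Bernoulli's inequality keeps the weights `r ^ (2n)` in Parseval's
identity above `1 / 2` for all `n < N`. -/
lemma sum_range_sq_norm_tc_le {g : ℂ → ℂ} (hg : DifferentiableOn ℂ g (ball (0 : ℂ) 1)) {N : ℕ}
    (hN : 1 ≤ N) :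
    ∑ n ∈ Finset.range N, ‖tc g n‖ ^ 2 ≤ 2 * M2 g (1 - 1 / (4 * N)) ^ 2 := by
  have hN0 : (N : ℝ) ≠ 0 := by exact_mod_cast (Nat.one_le_iff_ne_zero.1 hN)
  set r : ℝ := 1 - 1 / (4 * N) with hr
  have hr01 : r ∈ Ico (0 : ℝ) 1 := one_sub_one_div_four_mul_mem_Ico hN
  have hpow : 1 / 2 ≤ r ^ (2 * N) := by
    have h := one_add_mul_sub_le_pow (a := r) (by linarith [hr01.1]) (2 * N)
    have hval : 1 + ((2 * N : ℕ) : ℝ) * (r - 1) = 1 / 2 := by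
      rw [hr]; push_cast; field_simp; ring
    rwa [hval] at h
  have hparseval := hasSum_sq_norm_tc_mul_pow hg hr01
  calc ∑ n ∈ Finset.range N, ‖tc g n‖ ^ 2
      ≤ ∑ n ∈ Finset.range N, 2 * (‖tc g n‖ ^ 2 * r ^ (2 * n)) := by
        refine Finset.sum_le_sum fun n hn => ?_
        have : r ^ (2 * N) ≤ r ^ (2 * n) :=
          pow_le_pow_of_le_one hr01.1 hr01.2.le (by have := Finset.mem_range.1 hn; omega)
        nlinarith [sq_nonneg ‖tc g n‖]
    _ = 2 * ∑ n ∈ Finset.range N, ‖tc g n‖ ^ 2 * r ^ (2 * n) := (Finset.mul_sum ..).symm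
    _ ≤ 2 * M2 g r ^ 2 := by
        gcongr
        exact sum_le_hasSum _ (fun n _ => mul_nonneg (sq_nonneg _) (pow_nonneg hr01.1 _)) hparseval

/-! ### The mean Lipschitz space -/

lemma sqrt_one_sub_mul_M2_le {g : ℂ → ℂ} (hg : DifferentiableOn ℂ g (ball (0 : ℂ) 1)) {K : ℝ}
    (hK : ∀ n, ‖tc g n‖ ≤ K) {r : ℝ} (hr : r ∈ Ico (0 : ℝ) 1) : √(1 - r) * M2 g r ≤ K := by
  have hK0 : 0 ≤ K := (norm_nonneg _).trans (hK 0)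
  have hr1 : 0 < 1 - r := sub_pos.2 hr.2
  have hr2 : r ^ 2 < 1 := pow_lt_one₀ hr.1 hr.2 two_ne_zero
  have hgeom : HasSum (fun n : ℕ => K ^ 2 * r ^ (2 * n)) (K ^ 2 * (1 - r ^ 2)⁻¹) := by
    simpa only [pow_mul] using (hasSum_geometric_of_lt_one (sq_nonneg r) hr2).mul_left (K ^ 2)
  have hM2 : M2 g r ^ 2 ≤ K ^ 2 * (1 - r ^ 2)⁻¹ := by
    refine hasSum_le (fun n => ?_) (hasSum_sq_norm_tc_mul_pow hg hr) hgeom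
    have := hK n
    have := pow_nonneg hr.1 (2 * n)
    gcongr
  refine le_of_sq_le_sq ?_ hK0
  calc (√(1 - r) * M2 g r) ^ 2 = (1 - r) * M2 g r ^ 2 := by
        rw [mul_pow, Real.sq_sqrt hr1.le]
    _ ≤ (1 - r ^ 2) * (K ^ 2 * (1 - r ^ 2)⁻¹) := by
        gcongr
        nlinarith [hr.1, hr.2]
    _ = K ^ 2 := by field_simp [(sub_pos.2 hr2).ne']

lemma memLambda_and_lambdaNorm_le_of_hasSum {F : ℂ → ℂ} {b : ℕ → ℂ} {A : ℝ}
    (hF : ∀ z ∈ ball (0 : ℂ) 1, HasSum (fun n => b n * z ^ n) (F z))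
    (hb : ∀ n : ℕ, ‖b n‖ ≤ A / (n + 1)) : MemLambda F ∧ lambdaNorm F ≤ 2 * A := by
  have hA : 0 ≤ A := by simpa using (norm_nonneg _).trans (hb 0)
  have hdiff := differentiableOn_of_hasSum hF
  have hbound : ∀ r ∈ Ico (0 : ℝ) 1, √(1 - r) * M2 (deriv F) r ≤ A := by
    refine fun r hr => sqrt_one_sub_mul_M2_le (hdiff.deriv isOpen_ball) (fun n => ?_) hr
    have hn : ‖b (n + 1)‖ ≤ A / (n + 1) := by
      refine (hb (n + 1)).trans ?_
      push_cast
      gcongr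
      linarith
    rwa [norm_tc_deriv, tc_eq_of_hasSum hF, mul_comm, ← le_div_iff₀ (by positivity)]
  have hF0 : ‖F 0‖ ≤ A := by
    simpa [← tc_zero, tc_eq_of_hasSum hF] using hb 0
  refine ⟨⟨hdiff, A, hbound⟩, ?_⟩
  rw [lambdaNorm, two_mul]
  refine add_le_add hF0 (Real.sSup_le ?_ hA)
  rintro _ ⟨r, hr, rfl⟩
  exact hbound r hr

lemma cube_div_three_le_sum_sq (N : ℕ) :
    (N : ℝ) ^ 3 / 3 ≤ ∑ n ∈ Finset.range N, (n + 1 : ℝ) ^ 2 := by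
  induction N with
  | zero => simp
  | succ N ih =>
    rw [Finset.sum_range_succ]
    push_cast
    nlinarith [Nat.cast_nonneg (α := ℝ) N]

lemma MemLambda.exists_coeff_le_div {F : ℂ → ℂ} (hF : MemLambda F) {c : ℕ → ℝ} (hc : Antitone c)
    (hc0 : ∀ n, 0 ≤ c n) (htc : ∀ n, tc F n = c n) :
    ∃ C > 0, ∀ n : ℕ, 1 ≤ n → c n ≤ C / n := by
  obtain ⟨hdiff, D, hD⟩ := hF
  have hD0 : 0 ≤ D := (mul_nonneg (Real.sqrt_nonneg _) (M2_nonneg _ _)).trans (hD 0 (by simp))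
  refine ⟨5 * D + 1, by positivity, fun N hN => ?_⟩
  have hN0 : (0 : ℝ) < N := by exact_mod_cast hN
  have hM2 : M2 (deriv F) (1 - 1 / (4 * N)) ^ 2 ≤ 4 * N * D ^ 2 := by
    have h := pow_le_pow_left₀ (mul_nonneg (Real.sqrt_nonneg _) (M2_nonneg _ _))
      (hD _ (one_sub_one_div_four_mul_mem_Ico hN)) 2
    rwa [mul_pow, sub_sub_self, Real.sq_sqrt (by positivity), one_div_mul_eq_div,
      div_le_iff₀' (by positivity)] at h
  have hsum : (N : ℝ) ^ 3 / 3 * c N ^ 2 ≤ 8 * N * D ^ 2 :=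
    calc (N : ℝ) ^ 3 / 3 * c N ^ 2
        ≤ (∑ n ∈ Finset.range N, (n + 1 : ℝ) ^ 2) * c N ^ 2 := by
          gcongr
          exact cube_div_three_le_sum_sq N
      _ ≤ ∑ n ∈ Finset.range N, ‖tc (deriv F) n‖ ^ 2 := by
          rw [Finset.sum_mul]
          refine Finset.sum_le_sum fun n hn => ?_
          rw [norm_tc_deriv, htc, Complex.norm_of_nonneg (hc0 _), mul_pow]
          have := hc0 N
          have := hc (Nat.succ_le_of_lt (Finset.mem_range.1 hn))
          gcongr
      _ ≤ 2 * M2 (deriv F) (1 - 1 / (4 * N)) ^ 2 :=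
          sum_range_sq_norm_tc_le (hdiff.deriv isOpen_ball) hN
      _ ≤ 8 * N * D ^ 2 := by linarith
  have hsq : (c N * N) ^ 2 ≤ (5 * D) ^ 2 := by
    have h : N * (c N * N) ^ 2 ≤ N * (24 * D ^ 2) := by linear_combination 3 * hsum
    linarith [le_of_mul_le_mul_left h hN0, sq_nonneg D]
  rw [le_div_iff₀ hN0]
  linarith [le_of_sq_le_sq hsq (by positivity)]

/-! ### Bloch functions -/

/-- The Bloch seminorm `ρ_B`, so that `blochNorm f = ‖f 0‖ + blochSeminorm f`; as a real
supremum, it is junk (`0`) when `f` is not a Bloch function. -/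
def blochSeminorm (f : ℂ → ℂ) : ℝ :=
  sSup {x : ℝ | ∃ z ∈ ball (0 : ℂ) 1, x = (1 - ‖z‖ ^ 2) * ‖deriv f z‖}

lemma blochSeminorm_nonneg (f : ℂ → ℂ) : 0 ≤ blochSeminorm f := by
  refine Real.sSup_nonneg ?_
  rintro _ ⟨z, hz, rfl⟩
  have hz1 : ‖z‖ ^ 2 ≤ 1 := pow_le_one₀ (norm_nonneg z) (mem_ball_zero_iff.1 hz).le
  exact mul_nonneg (sub_nonneg.2 hz1) (norm_nonneg _)

lemma blochNorm_nonneg (f : ℂ → ℂ) : 0 ≤ blochNorm f :=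
  add_nonneg (norm_nonneg _) (blochSeminorm_nonneg f)

lemma log_two_div_one_sub {t : ℝ} (ht : t < 1) :
    Real.log (2 / (1 - t)) = Real.log 2 + Real.log (1 / (1 - t)) := by
  have ht1 : 1 - t ≠ 0 := (sub_pos.2 ht).ne'
  rw [← Real.log_mul two_ne_zero (one_div_ne_zero ht1), mul_one_div]

lemma log_one_div_one_sub_nonneg {t : ℝ} (ht : t ∈ Ico (0 : ℝ) 1) :
    0 ≤ Real.log (1 / (1 - t)) := by
  refine Real.log_nonneg ?_
  rw [le_div_iff₀ (sub_pos.2 ht.2)]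
  linarith [ht.1]

lemma log_two_le_log_two_div {t : ℝ} (ht : t ∈ Ico (0 : ℝ) 1) :
    Real.log 2 ≤ Real.log (2 / (1 - t)) := by
  linarith [log_two_div_one_sub ht.2, log_one_div_one_sub_nonneg ht]

lemma log_two_div_nonneg {t : ℝ} (ht : t ∈ Ico (0 : ℝ) 1) : 0 ≤ Real.log (2 / (1 - t)) :=
  (Real.log_nonneg one_le_two).trans (log_two_le_log_two_div ht)

namespace MemBloch

variable {f : ℂ → ℂ}

lemma norm_deriv_le (hf : MemBloch f) {z : ℂ} (hz : z ∈ ball (0 : ℂ) 1) :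
    ‖deriv f z‖ ≤ blochSeminorm f / (1 - ‖z‖) := by
  obtain ⟨-, M, hM⟩ := hf
  have hz1 : ‖z‖ < 1 := mem_ball_zero_iff.1 hz
  rw [le_div_iff₀' (sub_pos.2 hz1)]
  calc (1 - ‖z‖) * ‖deriv f z‖ ≤ (1 - ‖z‖ ^ 2) * ‖deriv f z‖ := by
        gcongr
        nlinarith [norm_nonneg z]
    _ ≤ blochSeminorm f := by
        refine le_csSup ⟨M, ?_⟩ ⟨z, hz, rfl⟩
        rintro _ ⟨w, hw, rfl⟩
        exact hM w hw

lemma norm_le (hf : MemBloch f) {z : ℂ} (hz : z ∈ ball (0 : ℂ) 1) :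
    ‖f z‖ ≤ ‖f 0‖ + blochSeminorm f * Real.log (1 / (1 - ‖z‖)) := by
  have hz1 : ‖z‖ < 1 := mem_ball_zero_iff.1 hz
  have hnorm {s : ℝ} (hs : s ∈ Icc (0 : ℝ) 1) : ‖s * z‖ = s * ‖z‖ := by
    rw [norm_mul, Complex.norm_of_nonneg hs.1]
  have hlt {s : ℝ} (hs : s ∈ Icc (0 : ℝ) 1) : s * ‖z‖ < 1 :=
    (mul_le_of_le_one_left (norm_nonneg z) hs.2).trans_lt hz1
  have hball {s : ℝ} (hs : s ∈ Icc (0 : ℝ) 1) : (s * z : ℂ) ∈ ball (0 : ℂ) 1 := by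
    rw [mem_ball_zero_iff, hnorm hs]
    exact hlt hs
  have hderiv (s : ℝ) (hs : s ∈ Icc (0 : ℝ) 1) :
      HasDerivAt (fun s : ℝ => f (s * z)) (deriv f (s * z) * z) s := by
    have hf' := (hf.1.differentiableAt (isOpen_ball.mem_nhds (hball hs))).hasDerivAt
    exact (hf'.comp (s : ℂ) (hasDerivAt_mul_const z)).comp_ofReal
  have hbound (s : ℝ) (hs : s ∈ Icc (0 : ℝ) 1) :
      HasDerivAt (fun s : ℝ => ‖f 0‖ + blochSeminorm f * -Real.log (1 - s * ‖z‖))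
        (blochSeminorm f / (1 - s * ‖z‖) * ‖z‖) s := by
    have hlog := ((hasDerivAt_mul_const ‖z‖).const_sub 1).log (sub_pos.2 (hlt hs)).ne'
    exact ((hlog.neg.const_mul (blochSeminorm f)).const_add ‖f 0‖).congr_deriv (by ring)
  have h := image_norm_le_of_norm_deriv_right_le_deriv_boundary'
    (fun s hs => (hderiv s hs).continuousAt.continuousWithinAt)
    (fun s hs => (hderiv s (Ico_subset_Icc_self hs)).hasDerivWithinAt) (by simp)
    (fun s hs => (hbound s hs).continuousAt.continuousWithinAt)
    (fun s hs => (hbound s (Ico_subset_Icc_self hs)).hasDerivWithinAt)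
    (fun s hs => by
      rw [norm_mul, ← hnorm (Ico_subset_Icc_self hs)]
      gcongr
      exact hf.norm_deriv_le (hball (Ico_subset_Icc_self hs)))
    (right_mem_Icc.2 zero_le_one)
  simpa using h

lemma norm_ofReal_le (hf : MemBloch f) {t : ℝ} (ht : t ∈ Ico (0 : ℝ) 1) :
    ‖f t‖ ≤ blochNorm f / Real.log 2 * Real.log (2 / (1 - t)) := by
  have hlog2 : 0 < Real.log 2 := Real.log_pos one_lt_two
  have hlog := log_one_div_one_sub_nonneg ht
  have hle_one : Real.log 2 ≤ 1 := by linarith [Real.log_two_lt_d9]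
  have hgrowth := hf.norm_le (z := t) (by simp [abs_of_nonneg ht.1, ht.2])
  rw [Complex.norm_of_nonneg ht.1] at hgrowth
  rw [div_mul_eq_mul_div, le_div_iff₀ hlog2, log_two_div_one_sub ht.2]
  calc ‖f t‖ * Real.log 2
      ≤ (‖f 0‖ + blochSeminorm f * Real.log (1 / (1 - t))) * Real.log 2 := by gcongr
    _ = ‖f 0‖ * Real.log 2 + blochSeminorm f * (Real.log (1 / (1 - t)) * Real.log 2) := by ring
    _ ≤ ‖f 0‖ * (Real.log 2 + Real.log (1 / (1 - t)))
          + blochSeminorm f * (Real.log 2 + Real.log (1 / (1 - t))) := by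
        have := blochSeminorm_nonneg f
        gcongr
        · linarith
        · linarith [mul_le_of_le_one_right hlog hle_one]
    _ = (‖f 0‖ + blochSeminorm f) * (Real.log 2 + Real.log (1 / (1 - t))) := (add_mul ..).symm

lemma M2_deriv_le (hf : MemBloch f) {r : ℝ} (hr : r ∈ Ico (0 : ℝ) 1) :
    M2 (deriv f) r ≤ blochSeminorm f / (1 - r) := by
  have hsphere : sphere (0 : ℂ) |r| ⊆ ball 0 1 :=
    sphere_subset_ball (by rw [abs_of_nonneg hr.1]; exact hr.2)
  refine M2_le_of_norm_le (fun z hz => ?_)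
    ((hf.1.deriv isOpen_ball).continuousOn.mono hsphere)
  have hzr : ‖z‖ = r := by rw [mem_sphere_zero_iff_norm.1 hz, abs_of_nonneg hr.1]
  exact hzr ▸ hf.norm_deriv_le (hsphere hz)

lemma sum_mul_norm_tc_le (hf : MemBloch f) (N : ℕ) :
    ∑ k ∈ Finset.Icc 1 N, k * ‖tc f k‖ ≤ 6 * blochSeminorm f * (N : ℝ) ^ (3 / 2 : ℝ) := by
  rcases Nat.eq_zero_or_pos N with rfl | hN
  · simp
  have hρ := blochSeminorm_nonneg f
  have hM2 : M2 (deriv f) (1 - 1 / (4 * N)) ≤ 4 * N * blochSeminorm f := by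
    have h := hf.M2_deriv_le (one_sub_one_div_four_mul_mem_Ico hN)
    rwa [sub_sub_self, div_div_eq_mul_div, div_one, mul_comm (blochSeminorm f)] at h
  have hsq : (∑ k ∈ Finset.Icc 1 N, k * ‖tc f k‖) ^ 2
      ≤ (6 * blochSeminorm f * (N : ℝ) ^ (3 / 2 : ℝ)) ^ 2 :=
    calc (∑ k ∈ Finset.Icc 1 N, k * ‖tc f k‖) ^ 2
        = (∑ n ∈ Finset.range N, ‖tc (deriv f) n‖) ^ 2 := by
          simp_rw [Finset.range_eq_Ico, norm_tc_deriv]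
          rw [← Finset.Ico_add_one_right_eq_Icc,
            ← Finset.sum_Ico_add' (fun k => k * ‖tc f k‖) 0 N 1]
          simp
      _ ≤ N * ∑ n ∈ Finset.range N, ‖tc (deriv f) n‖ ^ 2 := by
          simpa using sq_sum_le_card_mul_sum_sq (s := Finset.range N)
            (f := fun n => ‖tc (deriv f) n‖)
      _ ≤ N * (2 * (4 * N * blochSeminorm f) ^ 2) := by
          have := M2_nonneg (deriv f) (1 - 1 / (4 * N))
          grw [sum_range_sq_norm_tc_le (hf.1.deriv isOpen_ball) hN, hM2]
      _ ≤ (6 * blochSeminorm f * (N : ℝ) ^ (3 / 2 : ℝ)) ^ 2 := by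
          have hpow : ((N : ℝ) ^ (3 / 2 : ℝ)) ^ 2 = N ^ 3 := by
            rw [← Real.rpow_mul_natCast (by positivity), ← Real.rpow_natCast]
            norm_num
          have : 0 ≤ blochSeminorm f ^ 2 * (N : ℝ) ^ 3 := by positivity
          rw [mul_pow _ ((N : ℝ) ^ (3 / 2 : ℝ)), hpow]
          linarith
  exact le_of_sq_le_sq hsq (by positivity)

lemma summable_norm_tc_div (hf : MemBloch f) : Summable fun k : ℕ => ‖tc f k‖ / k := by
  have hO : (fun n : ℕ => ∑ k ∈ Finset.Icc 1 n, ‖(k : ℂ) * tc f k‖)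
      =O[Filter.atTop] fun n => (n : ℝ) ^ (3 / 2 : ℝ) := by
    refine .of_bound (6 * blochSeminorm f) (.of_forall fun n => ?_)
    simp_rw [norm_mul, Complex.norm_natCast]
    rw [Real.norm_of_nonneg (Finset.sum_nonneg fun _ _ => by positivity),
      Real.norm_of_nonneg (by positivity)]
    exact hf.sum_mul_norm_tc_le n
  have h := LSeriesSummable_of_sum_norm_bigO (s := 2) hO (by norm_num) (by norm_num)
  refine h.norm.congr fun k => ?_
  rcases eq_or_ne k 0 with rfl | hk
  · simp
  · simp [LSeries.term_of_ne_zero hk]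
    field_simp

end MemBloch

/-! ### Logarithmic Carleson measures -/

lemma IsLogCarleson.exists_ofReal_mul_measure_le {μ : Measure ℝ} [IsFiniteMeasure μ] {α s : ℝ}
    (h : IsLogCarleson μ α s) :
    ∃ C > 0, ∀ t ∈ Ico (0 : ℝ) 1,
      ENNReal.ofReal (Real.log (2 / (1 - t)) ^ α) * μ (Ico t 1) ≤
        ENNReal.ofReal (C * (1 - t) ^ s) := by
  obtain ⟨C, hC, hμ⟩ := h
  refine ⟨C, hC, fun t ht => ?_⟩
  rw [← ENNReal.ofReal_toReal (measure_ne_top μ (Ico t 1)), ← ENNReal.ofReal_mul' (by simp),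
    mul_comm]
  exact ENNReal.ofReal_le_ofReal (hμ t ht)

lemma Ico_subset_iUnion_dyadic (t : ℝ) :
    Ico t 1 ⊆ ⋃ j : ℕ, Ico (1 - (1 / 2) ^ j * (1 - t)) (1 - (1 / 2) ^ j * (1 - t) / 2) := by
  rintro x ⟨htx, hx⟩
  have ht1 : 0 < 1 - t := sub_pos.2 (htx.trans_lt hx)
  have hy0 : 0 < (1 - x) / (1 - t) := div_pos (sub_pos.2 hx) ht1
  have hy1 : (1 - x) / (1 - t) ≤ 1 := (div_le_one ht1).2 (by linarith)
  obtain ⟨j, hlt, hle⟩ := exists_nat_pow_near_of_lt_one hy0 hy1 one_half_pos one_half_lt_one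
  rw [lt_div_iff₀ ht1, pow_succ] at hlt
  rw [div_le_iff₀ ht1] at hle
  exact mem_iUnion.2 ⟨j, by linarith, by linarith⟩

lemma log_two_div_le_two_mul {t x : ℝ} (ht : t ∈ Ico (0 : ℝ) 1) (hx : (1 - t) / 2 ≤ 1 - x) :
    Real.log (2 / (1 - x)) ≤ 2 * Real.log (2 / (1 - t)) := by
  have ht1 : 0 < 1 - t := sub_pos.2 ht.2
  calc Real.log (2 / (1 - x)) ≤ Real.log (2 / ((1 - t) / 2)) :=
        Real.log_le_log (div_pos two_pos (by linarith)) (by gcongr)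
    _ = Real.log 2 + Real.log (2 / (1 - t)) := by
        rw [← Real.log_mul two_ne_zero (by positivity), div_div_eq_mul_div, mul_div_assoc]
    _ ≤ 2 * Real.log (2 / (1 - t)) := by linarith [log_two_le_log_two_div ht]

lemma lintegral_log_rpow_dyadic_le (μ : Measure ℝ) {α : ℝ} (hα : 0 ≤ α) {t : ℝ}
    (ht : t ∈ Ico (0 : ℝ) 1) :
    ∫⁻ x in Ico t (1 - (1 - t) / 2), ENNReal.ofReal (Real.log (2 / (1 - x)) ^ α) ∂μ ≤
      ENNReal.ofReal (2 ^ α) *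
        (ENNReal.ofReal (Real.log (2 / (1 - t)) ^ α) * μ (Ico t 1)) := by
  have ht1 : 0 < 1 - t := sub_pos.2 ht.2
  have hlog : ∀ x ∈ Ico t (1 - (1 - t) / 2),
      Real.log (2 / (1 - x)) ^ α ≤ 2 ^ α * Real.log (2 / (1 - t)) ^ α := fun x hx => by
    have hx1 : x < 1 := by linarith [hx.2]
    rw [← Real.mul_rpow two_pos.le (log_two_div_nonneg ht)]
    exact Real.rpow_le_rpow (log_two_div_nonneg ⟨ht.1.trans hx.1, hx1⟩)
      (log_two_div_le_two_mul ht (by linarith [hx.2])) hα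
  calc ∫⁻ x in Ico t (1 - (1 - t) / 2), ENNReal.ofReal (Real.log (2 / (1 - x)) ^ α) ∂μ
      ≤ ∫⁻ _ in Ico t (1 - (1 - t) / 2),
          ENNReal.ofReal (2 ^ α * Real.log (2 / (1 - t)) ^ α) ∂μ :=
        setLIntegral_mono' measurableSet_Ico fun x hx => ENNReal.ofReal_le_ofReal (hlog x hx)
    _ ≤ ENNReal.ofReal (2 ^ α) *
          (ENNReal.ofReal (Real.log (2 / (1 - t)) ^ α) * μ (Ico t 1)) := by
        rw [setLIntegral_const, ENNReal.ofReal_mul (by positivity), mul_assoc]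
        gcongr
        linarith

/-- On each dyadic piece of `[t, 1)` the logarithm varies by a factor at most `2`, so the integral
is dominated by a geometric series of the quantities in `IsLogCarleson`. -/
lemma IsLogCarleson.exists_lintegral_log_rpow_le {μ : Measure ℝ} [IsFiniteMeasure μ] {α s : ℝ}
    (h : IsLogCarleson μ α s) (hα : 0 ≤ α) (hs : 0 < s) :
    ∃ C > 0, ∀ t ∈ Ico (0 : ℝ) 1,
      ∫⁻ x in Ico t 1, ENNReal.ofReal (Real.log (2 / (1 - x)) ^ α) ∂μ ≤
        ENNReal.ofReal (C * (1 - t) ^ s) := by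
  obtain ⟨C, hC, hμ⟩ := h.exists_ofReal_mul_measure_le
  have hq1 : ((1 / 2) ^ s : ℝ) < 1 := Real.rpow_lt_one (by norm_num) (by norm_num) hs
  refine ⟨2 ^ α * C * (1 - (1 / 2) ^ s)⁻¹, by have := sub_pos.2 hq1; positivity, fun t ht => ?_⟩
  have ht1 : 0 < 1 - t := sub_pos.2 ht.2
  have hpiece (j : ℕ) :
      ∫⁻ x in Ico (1 - (1 / 2) ^ j * (1 - t)) (1 - (1 / 2) ^ j * (1 - t) / 2),
          ENNReal.ofReal (Real.log (2 / (1 - x)) ^ α) ∂μ ≤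
        ENNReal.ofReal (2 ^ α * C * (1 - t) ^ s * ((1 / 2) ^ s) ^ j) := by
    have hτ : 1 - (1 / 2) ^ j * (1 - t) ∈ Ico (0 : ℝ) 1 := by
      have : (1 / 2 : ℝ) ^ j ≤ 1 := pow_le_one₀ (by norm_num) (by norm_num)
      exact ⟨by nlinarith [ht.1], sub_lt_self _ (by positivity)⟩
    have hslice := lintegral_log_rpow_dyadic_le μ hα hτ
    have htail := hμ _ hτ
    simp only [sub_sub_self] at hslice htail
    refine (hslice.trans (mul_le_mul_right htail _)).trans_eq ?_
    rw [← ENNReal.ofReal_mul (by positivity), Real.mul_rpow (by positivity) ht1.le,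
      Real.rpow_pow_comm (by norm_num)]
    congr 1
    ring
  have hgeom := (hasSum_geometric_of_lt_one (by positivity) hq1).mul_left (2 ^ α * C * (1 - t) ^ s)
  calc ∫⁻ x in Ico t 1, ENNReal.ofReal (Real.log (2 / (1 - x)) ^ α) ∂μ
      ≤ ∑' j : ℕ, ∫⁻ x in Ico (1 - (1 / 2) ^ j * (1 - t)) (1 - (1 / 2) ^ j * (1 - t) / 2),
          ENNReal.ofReal (Real.log (2 / (1 - x)) ^ α) ∂μ :=
        (lintegral_mono_set (Ico_subset_iUnion_dyadic t)).trans (lintegral_iUnion_le _ _)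
    _ ≤ ∑' j : ℕ, ENNReal.ofReal (2 ^ α * C * (1 - t) ^ s * ((1 / 2) ^ s) ^ j) :=
        ENNReal.tsum_le_tsum hpiece
    _ = ENNReal.ofReal (2 ^ α * C * (1 - (1 / 2) ^ s)⁻¹ * (1 - t) ^ s) := by
        rw [← ENNReal.ofReal_tsum_of_nonneg (fun j => by positivity) hgeom.summable,
          hgeom.tsum_eq]
        congr 1
        ring

lemma lintegral_mul_one_sub_pow (k : ℕ) :
    ∫⁻ x in Ioc (0 : ℝ) 1, ENNReal.ofReal ((1 - x) * ((k + 1) * x ^ k)) =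
      ENNReal.ofReal (1 / (k + 2)) := by
  rw [← ofReal_integral_eq_lintegral_ofReal
    ((by fun_prop : Continuous fun x : ℝ => (1 - x) * ((k + 1) * x ^ k)).integrableOn_Ioc)
    ((ae_restrict_iff' measurableSet_Ioc).2 <| .of_forall fun x hx => by
      have := hx.1
      have := sub_nonneg.2 hx.2
      positivity), ← intervalIntegral.integral_of_le zero_le_one]
  have hexpand (x : ℝ) :
      (1 - x) * ((k + 1) * x ^ k) = (k + 1) * x ^ k - (k + 1) * x ^ (k + 1) := by ring
  simp_rw [hexpand]
  rw [intervalIntegral.integral_sub (by apply Continuous.intervalIntegrable; fun_prop)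
    (by apply Continuous.intervalIntegrable; fun_prop)]
  simp only [intervalIntegral.integral_const_mul, integral_pow]
  congr 1
  push_cast
  field_simp
  simp
  ring

lemma lintegral_pow_succ_eq_lintegral_measure_Ico (ν : Measure ℝ) (k : ℕ) :
    ∫⁻ t in Ico (0 : ℝ) 1, ENNReal.ofReal (t ^ (k + 1)) ∂ν =
      ∫⁻ x in Ioc (0 : ℝ) 1, ν (Ico x 1) * ENNReal.ofReal ((k + 1) * x ^ k) := by
  have hlayer := lintegral_comp_eq_lintegral_meas_le_mul (ν.restrict (Ico 0 1))
    (f := fun t => t) (g := fun x => (k + 1) * x ^ k)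
    ((ae_restrict_iff' measurableSet_Ico).2 <| .of_forall fun t ht => ht.1)
    aemeasurable_id
    (fun t _ => (by fun_prop : Continuous fun x : ℝ => (k + 1) * x ^ k).intervalIntegrable _ _)
    ((ae_restrict_iff' measurableSet_Ioi).2 <| .of_forall fun x hx => by
      have : 0 < x := hx
      positivity)
  have htail {x : ℝ} (hx : 0 < x) : (ν.restrict (Ico 0 1)) {a | x ≤ a} = ν (Ico x 1) := by
    rw [Measure.restrict_apply' measurableSet_Ico]
    congr 1
    ext a
    exact ⟨fun ha => ⟨ha.1, ha.2.2⟩, fun ha => ⟨ha.1, hx.le.trans ha.1, ha.2⟩⟩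
  calc ∫⁻ t in Ico (0 : ℝ) 1, ENNReal.ofReal (t ^ (k + 1)) ∂ν
      = ∫⁻ x in Ioi 0, (ν.restrict (Ico 0 1)) {a | x ≤ a} *
          ENNReal.ofReal ((k + 1) * x ^ k) := by
        rw [← hlayer]
        refine lintegral_congr fun t => ?_
        rw [intervalIntegral.integral_const_mul, integral_pow]
        congr 1
        field_simp
        simp
    _ = ∫⁻ x in Ioi 0, ν (Ico x 1) * ENNReal.ofReal ((k + 1) * x ^ k) :=
        setLIntegral_congr_fun measurableSet_Ioi fun x hx => by simp only [htail hx]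
    _ = ∫⁻ x in Ioc (0 : ℝ) 1, ν (Ico x 1) * ENNReal.ofReal ((k + 1) * x ^ k) := by
        rw [← Ioc_union_Ioi_eq_Ioi zero_le_one, lintegral_union measurableSet_Ioi
          (disjoint_left.2 fun x hx hx1 => hx.2.not_gt hx1), setLIntegral_eq_zero measurableSet_Ioi
          fun x hx => by simp [Ico_eq_empty_of_le (mem_Ioi.1 hx).le], add_zero]

lemma lintegral_pow_le_of_measure_Ico_le {ν : Measure ℝ} {C : ℝ}
    (hν : ∀ t ∈ Ico (0 : ℝ) 1, ν (Ico t 1) ≤ ENNReal.ofReal (C * (1 - t))) (n : ℕ) :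
    ∫⁻ t in Ico (0 : ℝ) 1, ENNReal.ofReal (t ^ n) ∂ν ≤ ENNReal.ofReal (C / (n + 1)) := by
  obtain _ | k := n
  · simpa using hν 0 (by simp)
  calc ∫⁻ t in Ico (0 : ℝ) 1, ENNReal.ofReal (t ^ (k + 1)) ∂ν
      = ∫⁻ x in Ioc (0 : ℝ) 1, ν (Ico x 1) * ENNReal.ofReal ((k + 1) * x ^ k) :=
        lintegral_pow_succ_eq_lintegral_measure_Ico ν k
    _ ≤ ∫⁻ x in Ioc (0 : ℝ) 1,
          ENNReal.ofReal C * ENNReal.ofReal ((1 - x) * ((k + 1) * x ^ k)) := by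
        refine setLIntegral_mono' measurableSet_Ioc fun x hx => ?_
        have hx1 : 0 ≤ 1 - x := sub_nonneg.2 hx.2
        rw [ENNReal.ofReal_mul hx1, ← mul_assoc, ← ENNReal.ofReal_mul' hx1]
        gcongr
        rcases hx.2.eq_or_lt with rfl | hlt
        · simp
        · exact hν x ⟨hx.1.le, hlt⟩
    _ = ENNReal.ofReal (C / ((k + 1 : ℕ) + 1)) := by
        rw [lintegral_const_mul' _ _ ENNReal.ofReal_ne_top, lintegral_mul_one_sub_pow,
          ← ENNReal.ofReal_mul' (by positivity)]
        congr 1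
        push_cast
        ring

lemma measure_Ico_le_of_lintegral_pow_le {ν : Measure ℝ} {C : ℝ} (hC : 0 ≤ C)
    (hν : ∀ n : ℕ, 1 ≤ n →
      ∫⁻ t in Ico (0 : ℝ) 1, ENNReal.ofReal (t ^ n) ∂ν ≤ ENNReal.ofReal (C / n))
    {t : ℝ} (ht : t ∈ Ico (1 / 2 : ℝ) 1) : ν (Ico t 1) ≤ ENNReal.ofReal (8 * C * (1 - t)) := by
  have ht1 : 0 < 1 - t := sub_pos.2 ht.2
  have ht0 : 0 ≤ t := one_half_pos.le.trans ht.1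
  set n := ⌊1 / (2 * (1 - t))⌋₊
  have hn1 : 1 ≤ n := by
    rw [Nat.one_le_floor_iff, le_div_iff₀ (by positivity)]
    linarith [ht.1]
  have hn0 : (1 : ℝ) ≤ n := by exact_mod_cast hn1
  have hn_le : n * (1 - t) ≤ 1 / 2 := by
    have h : (n : ℝ) ≤ 1 / (2 * (1 - t)) := Nat.floor_le (by positivity)
    rw [le_div_iff₀ (by positivity)] at h
    linarith
  have hle_n : 1 / (n : ℝ) ≤ 4 * (1 - t) := by
    have h : 1 / (2 * (1 - t)) < n + 1 := Nat.lt_floor_add_one _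
    rw [div_lt_iff₀ (by positivity)] at h
    rw [div_le_iff₀ (by positivity)]
    nlinarith
  have hpow : ∀ x ∈ Ico t 1, 1 / 2 ≤ x ^ n := fun x hx =>
    calc 1 / 2 ≤ 1 + n * (t - 1) := by linarith
      _ ≤ t ^ n := one_add_mul_sub_le_pow (by linarith) n
      _ ≤ x ^ n := pow_le_pow_left₀ ht0 hx.1 n
  calc ν (Ico t 1) = ENNReal.ofReal 2 * (ENNReal.ofReal (1 / 2) * ν (Ico t 1)) := by
        rw [← mul_assoc, ← ENNReal.ofReal_mul two_pos.le]
        norm_num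
    _ = ENNReal.ofReal 2 * ∫⁻ _ in Ico t 1, ENNReal.ofReal (1 / 2) ∂ν := by
        rw [setLIntegral_const]
    _ ≤ ENNReal.ofReal 2 * ∫⁻ x in Ico 0 1, ENNReal.ofReal (x ^ n) ∂ν := by
        refine mul_le_mul_right ?_ _
        exact (setLIntegral_mono' measurableSet_Ico fun x hx =>
          ENNReal.ofReal_le_ofReal (hpow x hx)).trans
          (lintegral_mono_set (Ico_subset_Ico_left ht0))
    _ ≤ ENNReal.ofReal 2 * ENNReal.ofReal (C / n) := by
        gcongr
        exact hν n hn1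
    _ ≤ ENNReal.ofReal (8 * C * (1 - t)) := by
        rw [← ENNReal.ofReal_mul two_pos.le]
        refine ENNReal.ofReal_le_ofReal ?_
        linarith [mul_le_mul_of_nonneg_left hle_n hC, mul_one_div C (n : ℝ)]

/-- The measure `log (a / (1 - t)) dμ(t)`: condition (iii) is a tail estimate for `a = 2`, and
condition (iv) a moment estimate for `a = 1`. -/
def logMeasure (a : ℝ) (μ : Measure ℝ) : Measure ℝ :=
  μ.withDensity fun t => ENNReal.ofReal (Real.log (a / (1 - t)))

lemma logMeasure_Ico (a : ℝ) (μ : Measure ℝ) (t : ℝ) :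
    logMeasure a μ (Ico t 1) = ∫⁻ x in Ico t 1, ENNReal.ofReal (Real.log (a / (1 - x))) ∂μ :=
  withDensity_apply _ measurableSet_Ico

lemma lintegral_pow_logMeasure (a : ℝ) (μ : Measure ℝ) (n : ℕ) :
    ∫⁻ t in Ico (0 : ℝ) 1, ENNReal.ofReal (t ^ n) ∂logMeasure a μ =
      ∫⁻ t in Ico (0 : ℝ) 1, ENNReal.ofReal (t ^ n * Real.log (a / (1 - t))) ∂μ := by
  rw [logMeasure, setLIntegral_withDensity_eq_setLIntegral_mul _ (by fun_prop) (by fun_prop)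
    measurableSet_Ico]
  refine setLIntegral_congr_fun measurableSet_Ico fun t ht => ?_
  rw [Pi.mul_apply, mul_comm, ENNReal.ofReal_mul (pow_nonneg ht.1 n)]

lemma IsLogCarleson.exists_lintegral_pow_mul_log_le {μ : Measure ℝ} [IsFiniteMeasure μ]
    (h : IsLogCarleson μ 1 1) :
    ∃ K > 0, ∀ n : ℕ,
      ∫⁻ t in Ico (0 : ℝ) 1, ENNReal.ofReal (t ^ n * Real.log (2 / (1 - t))) ∂μ ≤
        ENNReal.ofReal (K / (n + 1)) := by
  obtain ⟨K, hK, htail⟩ := h.exists_lintegral_log_rpow_le zero_le_one one_pos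
  simp_rw [Real.rpow_one, ← logMeasure_Ico] at htail
  refine ⟨K, hK, fun n => ?_⟩
  rw [← lintegral_pow_logMeasure]
  exact lintegral_pow_le_of_measure_Ico_le htail n

lemma LogMomentBigO.exists_measureReal_mul_log_le {μ : Measure ℝ} (h : LogMomentBigO μ) :
    ∃ C > 0, ∀ t ∈ Ico (1 / 2 : ℝ) 1,
      μ.real (Ico t 1) * Real.log (1 / (1 - t)) ≤ C * (1 - t) := by
  obtain ⟨C, hC, hmom⟩ := h
  simp_rw [← lintegral_pow_logMeasure] at hmom
  refine ⟨8 * C, by positivity, fun t ht => ?_⟩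
  have ht1 : 0 < 1 - t := sub_pos.2 ht.2
  have hlog := log_one_div_one_sub_nonneg ⟨one_half_pos.le.trans ht.1, ht.2⟩
  have htail : ENNReal.ofReal (Real.log (1 / (1 - t))) * μ (Ico t 1) ≤
      ENNReal.ofReal (8 * C * (1 - t)) :=
    calc ENNReal.ofReal (Real.log (1 / (1 - t))) * μ (Ico t 1)
        = ∫⁻ _ in Ico t 1, ENNReal.ofReal (Real.log (1 / (1 - t))) ∂μ := by
          rw [setLIntegral_const]
      _ ≤ logMeasure 1 μ (Ico t 1) := by
          rw [logMeasure_Ico]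
          refine setLIntegral_mono' measurableSet_Ico fun x hx => ENNReal.ofReal_le_ofReal ?_
          have hx1 : 0 < 1 - x := sub_pos.2 hx.2
          gcongr
          exact hx.1
      _ ≤ ENNReal.ofReal (8 * C * (1 - t)) := measure_Ico_le_of_lintegral_pow_le hC.le hmom ht
  have hreal := ENNReal.toReal_mono ENNReal.ofReal_ne_top htail
  rwa [ENNReal.toReal_mul, ENNReal.toReal_ofReal hlog, ENNReal.toReal_ofReal (by positivity),
    mul_comm] at hreal

lemma LogMomentBigO.isLogCarleson {μ : Measure ℝ} [IsFiniteMeasure μ] (h : LogMomentBigO μ) :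
    IsLogCarleson μ 1 1 := by
  obtain ⟨C, hC, htail⟩ := h.exists_measureReal_mul_log_le
  refine ⟨2 * C + 4 * μ.real univ * Real.log 2, by positivity, fun t ht => ?_⟩
  have ht1 : 0 < 1 - t := sub_pos.2 ht.2
  simp only [Real.rpow_one, ← measureReal_def, log_two_div_one_sub ht.2]
  rcases lt_or_ge t (1 / 2) with hlt | hge
  · have hle : Real.log (1 / (1 - t)) ≤ Real.log 2 := by
      refine Real.log_le_log (by positivity) ?_
      rw [div_le_iff₀ ht1]
      linarith
    calc μ.real (Ico t 1) * (Real.log 2 + Real.log (1 / (1 - t)))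
        ≤ μ.real univ * (2 * Real.log 2) := by
          have hmass : μ.real (Ico t 1) ≤ μ.real univ := measureReal_mono (subset_univ _)
          have := log_one_div_one_sub_nonneg ht
          gcongr
          linarith
      _ ≤ (2 * C + 4 * μ.real univ * Real.log 2) * (1 - t) := by
          have : 0 ≤ μ.real univ * Real.log 2 := by positivity
          nlinarith
  · have hle : Real.log 2 ≤ Real.log (1 / (1 - t)) := by
      refine Real.log_le_log two_pos ?_
      rw [le_div_iff₀ ht1]
      linarith
    calc μ.real (Ico t 1) * (Real.log 2 + Real.log (1 / (1 - t)))
        ≤ μ.real (Ico t 1) * (2 * Real.log (1 / (1 - t))) := by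
          gcongr
          linarith
      _ ≤ (2 * C + 4 * μ.real univ * Real.log 2) * (1 - t) := by
          have := htail t ⟨hge, ht.2⟩
          have : 0 ≤ μ.real univ * Real.log 2 * (1 - t) := by positivity
          linarith

/-! ### Moments along the radius and the two operators -/

/-- The moment `∫_{[0,1)} tⁿ f(t) dμ(t)` of order `n` of the complex measure `f dμ`. These are the
Taylor coefficients of `I_μ f` and, when the series converge, of `H_μ f`. -/
def radialMoment (μ : Measure ℝ) (f : ℂ → ℂ) (n : ℕ) : ℂ :=
  ∫ t in Ico (0 : ℝ) 1, (t : ℂ) ^ n * f t ∂μ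

lemma ofReal_mem_ball {t : ℝ} (ht : t ∈ Ico (0 : ℝ) 1) : (t : ℂ) ∈ ball (0 : ℂ) 1 := by
  simpa [abs_of_nonneg ht.1] using ht.2

lemma norm_ofReal_pow_mul {t : ℝ} (ht : 0 ≤ t) (n : ℕ) (w : ℂ) :
    ‖(t : ℂ) ^ n * w‖ = t ^ n * ‖w‖ := by
  rw [norm_mul, norm_pow, Complex.norm_of_nonneg ht]

lemma aestronglyMeasurable_ofReal_pow_mul {μ : Measure ℝ} {f : ℂ → ℂ}
    (hf : ContinuousOn f (ball 0 1)) (n : ℕ) :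
    AEStronglyMeasurable (fun t : ℝ => (t : ℂ) ^ n * f t) (μ.restrict (Ico 0 1)) :=
  ((by fun_prop : Continuous fun t : ℝ => (t : ℂ) ^ n).continuousOn.mul <|
    hf.comp Complex.continuous_ofReal.continuousOn fun _ => ofReal_mem_ball).aestronglyMeasurable
      measurableSet_Ico

section Imu

variable {μ : Measure ℝ} {f : ℂ → ℂ}

lemma norm_ofReal_mul_le {t : ℝ} (ht : t ∈ Ico (0 : ℝ) 1) (z : ℂ) : ‖(t : ℂ) * z‖ ≤ ‖z‖ := by
  rw [norm_mul, Complex.norm_of_nonneg ht.1]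
  exact mul_le_of_le_one_left (norm_nonneg z) ht.2.le

lemma imuWD_of_integrableOn (hf : IntegrableOn (fun t : ℝ => f t) (Ico 0 1) μ) : ImuWD μ f := by
  intro z hz
  have hz1 : 0 < 1 - ‖z‖ := sub_pos.2 (mem_ball_zero_iff.1 hz)
  simp_rw [div_eq_mul_inv]
  refine hf.mul_bdd (c := (1 - ‖z‖)⁻¹) (by fun_prop) ?_
  filter_upwards [ae_restrict_mem measurableSet_Ico] with t ht
  rw [norm_inv]
  refine inv_anti₀ hz1 ?_
  have := norm_sub_norm_le (1 : ℂ) (t * z)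
  rw [norm_one] at this
  linarith [norm_ofReal_mul_le ht z]

lemma ImuWD.integrableOn (h : ImuWD μ f) : IntegrableOn (fun t : ℝ => f t) (Ico 0 1) μ := by
  simpa using h 0 (mem_ball_self one_pos)

lemma hasSum_Imu (hf : IntegrableOn (fun t : ℝ => f t) (Ico 0 1) μ) {z : ℂ}
    (hz : z ∈ ball (0 : ℂ) 1) :
    HasSum (fun n => radialMoment μ f n * z ^ n) (Imu μ f z) := by
  have hz1 : ‖z‖ < 1 := mem_ball_zero_iff.1 hz
  simp_rw [radialMoment, ← integral_mul_const]
  refine hasSum_integral_of_dominated_convergence (fun n t => ‖f t‖ * ‖z‖ ^ n)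
    (fun n => ((by fun_prop : Continuous fun t : ℝ => (t : ℂ) ^ n).aestronglyMeasurable.mul
      hf.1).mul_const _) (fun n => ?_)
    (.of_forall fun t => (summable_geometric_of_lt_one (norm_nonneg z) hz1).mul_left _) ?_ ?_
  · filter_upwards [ae_restrict_mem measurableSet_Ico] with t ht
    rw [norm_mul, norm_pow, norm_ofReal_pow_mul ht.1]
    gcongr
    exact mul_le_of_le_one_left (norm_nonneg _) (pow_le_one₀ ht.1 ht.2.le)
  · simp_rw [tsum_mul_left]
    exact hf.norm.mul_const _
  · filter_upwards [ae_restrict_mem measurableSet_Ico] with t ht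
    have hgeom := (hasSum_geometric_of_norm_lt_one
      ((norm_ofReal_mul_le ht z).trans_lt hz1)).mul_left (f t)
    simpa only [mul_pow, div_eq_mul_inv, mul_left_comm (f t), mul_assoc] using hgeom

end Imu

section Hmu

variable {μ : Measure ℝ} {f : ℂ → ℂ}

lemma mom_nonneg (μ : Measure ℝ) (n : ℕ) : 0 ≤ mom μ n :=
  setIntegral_nonneg measurableSet_Ico fun _ ht => pow_nonneg ht.1 n

lemma radialMoment_one (μ : Measure ℝ) (n : ℕ) : radialMoment μ (fun _ => 1) n = mom μ n := by
  simp only [radialMoment, mom, mul_one, ← Complex.ofReal_pow, integral_complex_ofReal]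

lemma norm_mom (μ : Measure ℝ) (n : ℕ) : ‖(mom μ n : ℂ)‖ = mom μ n :=
  Complex.norm_of_nonneg (mom_nonneg μ n)

lemma integrableOn_ofReal_pow_mul_const (μ : Measure ℝ) [IsFiniteMeasure μ] (n : ℕ) (a : ℂ) :
    IntegrableOn (fun t : ℝ => (t : ℂ) ^ n * a) (Ico 0 1) μ := by
  refine Integrable.mono' (integrable_const ‖a‖)
    (by fun_prop : Continuous fun t : ℝ => (t : ℂ) ^ n * a).aestronglyMeasurable ?_
  filter_upwards [ae_restrict_mem measurableSet_Ico] with t ht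
  rw [norm_ofReal_pow_mul ht.1]
  exact mul_le_of_le_one_left (norm_nonneg a) (pow_le_one₀ ht.1 ht.2.le)

lemma integral_norm_ofReal_pow_mul_const (μ : Measure ℝ) (n : ℕ) (a : ℂ) :
    ∫ t in Ico (0 : ℝ) 1, ‖(t : ℂ) ^ n * a‖ ∂μ = ‖(mom μ n : ℂ) * a‖ := by
  rw [norm_mul, norm_mom, mom, ← integral_mul_const]
  exact setIntegral_congr_fun measurableSet_Ico fun t ht => norm_ofReal_pow_mul ht.1 n a

lemma integrable_of_hasSum_of_summable_integral_norm {α ι E : Type*} [MeasurableSpace α]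
    [Countable ι] [NormedAddCommGroup E] {ν : Measure α} {F : ι → α → E} {g : α → E}
    (hF : ∀ k, Integrable (F k) ν) (hsum : Summable fun k => ∫ a, ‖F k a‖ ∂ν)
    (hg : AEStronglyMeasurable g ν) (hFg : ∀ᵐ a ∂ν, HasSum (fun k => F k a) (g a)) :
    Integrable g ν := by
  refine ⟨hg, ?_⟩
  calc ∫⁻ a, ‖g a‖ₑ ∂ν ≤ ∫⁻ a, ∑' k, ‖F k a‖ₑ ∂ν := by
        refine lintegral_mono_ae (hFg.mono fun a ha => ?_)
        rw [← ha.tsum_eq]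
        exact enorm_tsum_le_tsum_enorm
    _ = ∑' k, ENNReal.ofReal (∫ a, ‖F k a‖ ∂ν) := by
        rw [lintegral_tsum fun k => (hF k).1.enorm]
        exact tsum_congr fun k => (ofReal_integral_norm_eq_lintegral_enorm (hF k)).symm
    _ < ∞ := hsum.tsum_ofReal_lt_top

lemma integrableOn_and_hmuCoeff_eq [IsFiniteMeasure μ]
    (hf : DifferentiableOn ℂ f (ball (0 : ℂ) 1)) {n : ℕ}
    (hs : Summable fun k : ℕ => ‖(mom μ (n + k) : ℂ) * tc f k‖) :
    IntegrableOn (fun t : ℝ => (t : ℂ) ^ n * f t) (Ico 0 1) μ ∧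
      hmuCoeff μ f n = radialMoment μ f n := by
  have hint (k : ℕ) := integrableOn_ofReal_pow_mul_const μ (n + k) (tc f k)
  have hnorm : Summable fun k => ∫ t in Ico (0 : ℝ) 1, ‖(t : ℂ) ^ (n + k) * tc f k‖ ∂μ := by
    simpa only [integral_norm_ofReal_pow_mul_const] using hs
  have htaylor : ∀ t ∈ Ico (0 : ℝ) 1,
      HasSum (fun k => (t : ℂ) ^ (n + k) * tc f k) ((t : ℂ) ^ n * f t) := fun t ht => by
    simpa only [pow_add, mul_assoc, mul_comm (tc f _)] using
      (hasSum_tc hf (ofReal_mem_ball ht)).mul_left ((t : ℂ) ^ n)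
  refine ⟨integrable_of_hasSum_of_summable_integral_norm hint hnorm
    (aestronglyMeasurable_ofReal_pow_mul hf.continuousOn n)
    ((ae_restrict_iff' measurableSet_Ico).2 (.of_forall htaylor)), ?_⟩
  calc hmuCoeff μ f n = ∑' k, ∫ t in Ico (0 : ℝ) 1, (t : ℂ) ^ (n + k) * tc f k ∂μ := by
        refine tsum_congr fun k => ?_
        rw [integral_mul_const, mom, ← integral_complex_ofReal]
        simp only [Complex.ofReal_pow]
    _ = ∫ t in Ico (0 : ℝ) 1, ∑' k, (t : ℂ) ^ (n + k) * tc f k ∂μ :=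
        (hasSum_integral_of_summable_integral_norm hint hnorm).tsum_eq
    _ = radialMoment μ f n :=
        setIntegral_congr_fun measurableSet_Ico fun t ht => (htaylor t ht).tsum_eq

lemma HmuWD.integrableOn [IsFiniteMeasure μ] (h : HmuWD μ f)
    (hf : DifferentiableOn ℂ f (ball (0 : ℂ) 1)) :
    IntegrableOn (fun t : ℝ => f t) (Ico 0 1) μ := by
  simpa using (integrableOn_and_hmuCoeff_eq hf (h.1 0)).1

lemma HmuWD.hasSum_Hmu [IsFiniteMeasure μ] (h : HmuWD μ f)
    (hf : DifferentiableOn ℂ f (ball (0 : ℂ) 1)) {z : ℂ} (hz : z ∈ ball (0 : ℂ) 1) :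
    HasSum (fun n => radialMoment μ f n * z ^ n) (Hmu μ f z) := by
  simp_rw [← fun n => (integrableOn_and_hmuCoeff_eq hf (h.1 n)).2]
  exact (h.2 z hz).of_norm.hasSum

end Hmu

/-! ### Boundedness on the Bloch space -/

lemma lintegral_enorm_pow_mul_le {μ : Measure ℝ} {K : ℝ}
    (hK : ∀ n : ℕ, ∫⁻ t in Ico (0 : ℝ) 1, ENNReal.ofReal (t ^ n * Real.log (2 / (1 - t))) ∂μ ≤
      ENNReal.ofReal (K / (n + 1))) {f : ℂ → ℂ} {A : ℝ} (hA : 0 ≤ A)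
    (hf : ∀ t ∈ Ico (0 : ℝ) 1, ‖f t‖ ≤ A * Real.log (2 / (1 - t))) (n : ℕ) :
    ∫⁻ t in Ico (0 : ℝ) 1, ‖(t : ℂ) ^ n * f t‖ₑ ∂μ ≤ ENNReal.ofReal (A * K / (n + 1)) :=
  calc ∫⁻ t in Ico (0 : ℝ) 1, ‖(t : ℂ) ^ n * f t‖ₑ ∂μ
      ≤ ∫⁻ t in Ico (0 : ℝ) 1,
          ENNReal.ofReal A * ENNReal.ofReal (t ^ n * Real.log (2 / (1 - t))) ∂μ := by
        refine setLIntegral_mono' measurableSet_Ico fun t ht => ?_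
        rw [← ofReal_norm, norm_ofReal_pow_mul ht.1, ← ENNReal.ofReal_mul hA, mul_left_comm]
        exact ENNReal.ofReal_le_ofReal
          (mul_le_mul_of_nonneg_left (hf t ht) (pow_nonneg ht.1 n))
    _ ≤ ENNReal.ofReal A * ENNReal.ofReal (K / (n + 1)) := by
        rw [lintegral_const_mul' _ _ ENNReal.ofReal_ne_top]
        exact mul_le_mul_right (hK n) _
    _ = ENNReal.ofReal (A * K / (n + 1)) := by rw [← ENNReal.ofReal_mul hA, mul_div_assoc]

namespace IsLogCarleson

variable {μ : Measure ℝ} [IsFiniteMeasure μ]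

lemma exists_norm_radialMoment_le (h : IsLogCarleson μ 1 1) :
    ∃ K > 0, ∀ f, MemBloch f → IntegrableOn (fun t : ℝ => f t) (Ico 0 1) μ ∧
      ∀ n : ℕ, ‖radialMoment μ f n‖ ≤ K * blochNorm f / (n + 1) := by
  obtain ⟨K, hK, hmom⟩ := h.exists_lintegral_pow_mul_log_le
  have hlog2 : 0 < Real.log 2 := Real.log_pos one_lt_two
  refine ⟨K / Real.log 2, by positivity, fun f hf => ?_⟩
  have hA : 0 ≤ blochNorm f / Real.log 2 := div_nonneg (blochNorm_nonneg f) hlog2.le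
  have hle := lintegral_enorm_pow_mul_le hmom hA fun t ht => hf.norm_ofReal_le ht
  refine ⟨⟨by simpa using aestronglyMeasurable_ofReal_pow_mul hf.1.continuousOn 0, ?_⟩,
    fun n => ?_⟩
  · exact (by simpa using hle 0 : ∫⁻ t in Ico (0 : ℝ) 1, ‖f t‖ₑ ∂μ ≤ _).trans_lt
      ENNReal.ofReal_lt_top
  · have hn := (enorm_integral_le_lintegral_enorm _).trans (hle n)
    rw [← ofReal_norm, ENNReal.ofReal_le_ofReal_iff (by positivity)] at hn
    exact hn.trans_eq (by ring)

lemma exists_mom_le (h : IsLogCarleson μ 1 1) :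
    ∃ K > 0, ∀ n : ℕ, mom μ n ≤ K / (n + 1) := by
  obtain ⟨K, hK, hmom⟩ := h.exists_norm_radialMoment_le
  have hone : MemBloch fun _ => 1 := ⟨differentiableOn_const 1, 0, by simp⟩
  refine ⟨K * (blochNorm fun _ => 1), ?_, fun n => ?_⟩
  · refine mul_pos hK (add_pos_of_pos_of_nonneg (by simp) (blochSeminorm_nonneg _))
  · simpa only [radialMoment_one, norm_mom] using (hmom _ hone).2 n

lemma summable_mom_mul_tc (h : IsLogCarleson μ 1 1) {f : ℂ → ℂ} (hf : MemBloch f) (n : ℕ) :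
    Summable fun k : ℕ => ‖(mom μ (n + k) : ℂ) * tc f k‖ := by
  obtain ⟨K, hK, hmom⟩ := h.exists_mom_le
  refine (hf.summable_norm_tc_div.mul_left K).of_norm_bounded_eventually_nat ?_
  filter_upwards [Filter.eventually_gt_atTop 0] with k hk
  have : (0 : ℝ) < k := Nat.cast_pos.2 hk
  rw [norm_norm, norm_mul, norm_mom, mul_div_left_comm, mul_comm]
  refine mul_le_mul_of_nonneg_left ((hmom (n + k)).trans ?_) (norm_nonneg _)
  push_cast
  gcongr
  linarith [n.cast_nonneg (α := ℝ)]

lemma hmuWD (h : IsLogCarleson μ 1 1) {f : ℂ → ℂ} (hf : MemBloch f) : HmuWD μ f := by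
  have hs := h.summable_mom_mul_tc hf
  refine ⟨hs, fun z hz => ?_⟩
  obtain ⟨_, _, hmom⟩ := h.exists_norm_radialMoment_le
  simp_rw [fun n => (integrableOn_and_hmuCoeff_eq hf.1 (hs n)).2]
  exact (hasSum_Imu (hmom f hf).1 hz).summable.norm

lemma exists_lambdaNorm_le (h : IsLogCarleson μ 1 1) :
    ∃ C > 0, ∀ f, MemBloch f → ∀ F : ℂ → ℂ,
      (∀ z ∈ ball (0 : ℂ) 1, HasSum (fun n => radialMoment μ f n * z ^ n) (F z)) →
        MemLambda F ∧ lambdaNorm F ≤ C * blochNorm f := by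
  obtain ⟨K, hK, hmom⟩ := h.exists_norm_radialMoment_le
  refine ⟨2 * K, by positivity, fun f hf F hF => ?_⟩
  rw [mul_assoc]
  exact memLambda_and_lambdaNorm_le_of_hasSum hF (hmom f hf).2

end IsLogCarleson

/-! ### The test function -/

/-- The Bloch function `z ↦ log (1 / (1 - z))`, whose moments along the radius are the integrals
in condition (iv). -/
def blochLog (z : ℂ) : ℂ := -Complex.log (1 - z)

lemma hasDerivAt_blochLog {z : ℂ} (hz : z ∈ ball (0 : ℂ) 1) :
    HasDerivAt blochLog (1 - z)⁻¹ z := by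
  have hslit : 1 - z ∈ Complex.slitPlane := by
    simpa [sub_eq_add_neg] using
      Complex.mem_slitPlane_of_norm_lt_one (z := -z) (by simpa using hz)
  exact (((hasDerivAt_id' z).const_sub 1).clog hslit).fun_neg.congr_deriv (by simp [neg_div])

lemma memBloch_blochLog : MemBloch blochLog := by
  refine ⟨fun z hz => (hasDerivAt_blochLog hz).differentiableAt.differentiableWithinAt, 2,
    fun z hz => ?_⟩
  have hz1 : 0 < 1 - ‖z‖ := sub_pos.2 (mem_ball_zero_iff.1 hz)
  have hle : 1 - ‖z‖ ≤ ‖1 - z‖ := by simpa using norm_sub_norm_le 1 z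
  rw [(hasDerivAt_blochLog hz).deriv, norm_inv, ← div_eq_mul_inv, div_le_iff₀ (hz1.trans_le hle)]
  nlinarith

lemma blochLog_ofReal {t : ℝ} (ht : t < 1) :
    blochLog t = (Real.log (1 / (1 - t)) : ℝ) := by
  rw [blochLog, one_div, Real.log_inv, Complex.ofReal_neg, Complex.ofReal_log (sub_pos.2 ht).le,
    Complex.ofReal_sub, Complex.ofReal_one]

lemma radialMoment_blochLog (μ : Measure ℝ) (n : ℕ) :
    radialMoment μ blochLog n =
      (∫ t in Ico (0 : ℝ) 1, t ^ n * Real.log (1 / (1 - t)) ∂μ : ℝ) := by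
  rw [← integral_complex_ofReal]
  refine setIntegral_congr_fun measurableSet_Ico fun t ht => ?_
  simp only [blochLog_ofReal ht.2, Complex.ofReal_mul, Complex.ofReal_pow]

lemma logMomentBigO_of_memLambda {μ : Measure ℝ} {F : ℂ → ℂ}
    (hint : IntegrableOn (fun t : ℝ => blochLog t) (Ico 0 1) μ) (hF : MemLambda F)
    (hsum : ∀ z ∈ ball (0 : ℂ) 1, HasSum (fun n => radialMoment μ blochLog n * z ^ n) (F z)) :
    LogMomentBigO μ := by
  have hnonneg (n : ℕ) : ∀ t ∈ Ico (0 : ℝ) 1, 0 ≤ t ^ n * Real.log (1 / (1 - t)) := fun t ht =>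
    mul_nonneg (pow_nonneg ht.1 n) (log_one_div_one_sub_nonneg ht)
  have hlog : IntegrableOn (fun t => Real.log (1 / (1 - t))) (Ico 0 1) μ :=
    (integrableOn_congr_fun (fun t ht => by simp [blochLog_ofReal ht.2]) measurableSet_Ico).1
      hint.re
  have hpow (n : ℕ) : IntegrableOn (fun t => t ^ n * Real.log (1 / (1 - t))) (Ico 0 1) μ := by
    refine hlog.bdd_mul (c := 1) (by fun_prop) ?_
    filter_upwards [ae_restrict_mem measurableSet_Ico] with t ht
    rw [norm_pow, Real.norm_of_nonneg ht.1]
    exact pow_le_one₀ ht.1 ht.2.le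
  have hanti : Antitone fun n : ℕ => ∫ t in Ico (0 : ℝ) 1, t ^ n * Real.log (1 / (1 - t)) ∂μ :=
    fun m n hmn => setIntegral_mono_on (hpow n) (hpow m) measurableSet_Ico fun t ht =>
      mul_le_mul_of_nonneg_right (pow_le_pow_of_le_one ht.1 ht.2.le hmn)
        (log_one_div_one_sub_nonneg ht)
  obtain ⟨C, hC, hle⟩ := hF.exists_coeff_le_div hanti
    (fun n => setIntegral_nonneg measurableSet_Ico (hnonneg n))
    (fun n => (tc_eq_of_hasSum hsum n).trans (radialMoment_blochLog μ n))
  refine ⟨C, hC, fun n hn => ?_⟩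
  rw [← ofReal_integral_eq_lintegral_ofReal (hpow n)
    ((ae_restrict_iff' measurableSet_Ico).2 (.of_forall (hnonneg n)))]
  exact ENNReal.ofReal_le_ofReal (hle n hn)

/-- Theorem 3.4 for `X = B` (the Bloch space): equivalent conditions for boundedness of
`I_μ` and `H_μ` from the Bloch space into `Λ²_{1/2}`. -/
theorem imu_hmu_bloch_lambda_tfae (μ : Measure ℝ) [IsFiniteMeasure μ]
    (hsupp : μ (Ico (0:ℝ) 1)ᶜ = 0) :
    [ (∀ f : ℂ → ℂ, MemBloch f → ImuWD μ f ∧ MemLambda (Imu μ f)) ∧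
        ∃ C > 0, ∀ f : ℂ → ℂ, MemBloch f → lambdaNorm (Imu μ f) ≤ C * blochNorm f,
      (∀ f : ℂ → ℂ, MemBloch f → HmuWD μ f ∧ MemLambda (Hmu μ f)) ∧
        ∃ C > 0, ∀ f : ℂ → ℂ, MemBloch f → lambdaNorm (Hmu μ f) ≤ C * blochNorm f,
      IsLogCarleson μ 1 1,
      LogMomentBigO μ ].TFAE := by
  tfae_have 3 → 1 := fun h => by
    obtain ⟨C, hC, hbound⟩ := h.exists_lambdaNorm_le
    obtain ⟨_, _, hmom⟩ := h.exists_norm_radialMoment_le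
    have hImu f (hf : MemBloch f) := hbound f hf (Imu μ f) fun _ => hasSum_Imu (hmom f hf).1
    exact ⟨fun f hf => ⟨imuWD_of_integrableOn (hmom f hf).1, (hImu f hf).1⟩,
      C, hC, fun f hf => (hImu f hf).2⟩
  tfae_have 3 → 2 := fun h => by
    obtain ⟨C, hC, hbound⟩ := h.exists_lambdaNorm_le
    have hHmu f (hf : MemBloch f) := hbound f hf (Hmu μ f) fun _ => (h.hmuWD hf).hasSum_Hmu hf.1
    exact ⟨fun f hf => ⟨h.hmuWD hf, (hHmu f hf).1⟩, C, hC, fun f hf => (hHmu f hf).2⟩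
  tfae_have 1 → 4 := fun h => by
    obtain ⟨hwd, hlam⟩ := h.1 blochLog memBloch_blochLog
    exact logMomentBigO_of_memLambda hwd.integrableOn hlam fun _ => hasSum_Imu hwd.integrableOn
  tfae_have 2 → 4 := fun h => by
    obtain ⟨hwd, hlam⟩ := h.1 blochLog memBloch_blochLog
    exact logMomentBigO_of_memLambda (hwd.integrableOn memBloch_blochLog.1) hlam fun _ =>
      hwd.hasSum_Hmu memBloch_blochLog.1
  tfae_have 4 → 3 := LogMomentBigO.isLogCarleson
  tfae_finish

end PaperHankel
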